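/- arXiv:2512.24734 — 6 statements merged into one kernel-verified Lean document; each statement's English description precedes it below -/
import Mathlib

section
/- Let (𝔭_j)_{j∈ℕ} be nonnegative reals with Σ_{j=0}^∞ 𝔭_j ≤ 1, and let a_k := μ_k(0) be the occupation probabilities of 0 for the boundary random walk started at i₀ = 0, defined by the substochastic iteration μ_0 = δ_0, μ_{k+1}(j) = Σ_{i∈ℕ} μ_k(i) P(i,j). Then for every x ∈ (0,1), the series F(x) := Σ_{k=0}^∞ a_k x^k converges and F(x) = 1 / (1 − x · Σ_{k=0}^∞ 𝔭_k ((1 − √(1 − x²))/x)^k). -/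
/-- The substochastic transition matrix of a boundary random walk on ℕ with
jumping measure `p` at the boundary state `0`: from `0` it moves to `j` with
probability `p j` (the deficit being the killing probability), and from `i ≥ 1`
it moves to `i - 1` or `i + 1` with probability `1/2` each. -/
noncomputable def Ptrans (p : ℕ → ℝ) : ℕ → ℕ → ℝ
  | 0, j => p j
  | i + 1, j => if j = i ∨ j = i + 2 then 1 / 2 else 0

/-- The (substochastic) distribution at time `k` of the boundary random walk
with jumping measure `p` started at `i₀`. -/
noncomputable def occ (p : ℕ → ℝ) (i₀ : ℕ) : ℕ → ℕ → ℝ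
  | 0 => fun j => if j = i₀ then 1 else 0
  | k + 1 => fun j => ∑' i : ℕ, occ p i₀ k i * Ptrans p i j

/-!
Pair the distributions `μ k` of the walk with the function `i ↦ r ^ i`, where
`r = (1 - √(1 - x ^ 2)) / x`. Since `x * (r ^ i + r ^ (i + 2)) / 2 = r ^ (i + 1)`, this function
satisfies `h - x • P h = (1 - x * G) • 1_{0}` with `G = ∑ⱼ p j * r ^ j`. Integrating against `μ k`
gives `μ k 0 * (1 - x * G) = μ k h - x * μ (k + 1) h`; multiplying by `x ^ k` and summing over `k`,
the right-hand side telescopes to `μ 0 h = r ^ i₀`.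
-/

section Kernel

variable {ι κ R : Type*} [NormedRing R]

/-- A kernel whose rows have `ℓ¹`-norm at most `1`, so that `μ ↦ ∑ᵢ μ i * K i ·` is a contraction
of `ℓ¹`. For nonnegative real entries these are the substochastic matrices; no sign is imposed, so
absolute values are summed. -/
structure IsContractionKernel (K : ι → κ → R) : Prop where
  summable_norm : ∀ i, Summable fun j => ‖K i j‖
  tsum_norm_le_one : ∀ i, ∑' j, ‖K i j‖ ≤ 1

theorem summable_norm_mul_of_norm_le {μ h : ι → R} {C : ℝ} (hμ : Summable fun i => ‖μ i‖)
    (hh : ∀ i, ‖h i‖ ≤ C) : Summable fun i => ‖μ i * h i‖ :=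
  (hμ.mul_right C).of_nonneg_of_le (fun _ => norm_nonneg _)
    fun i => norm_mul_le_of_le le_rfl (hh i)

theorem norm_tsum_mul_le_of_norm_le {μ h : ι → R} {C : ℝ} (hμ : Summable fun i => ‖μ i‖)
    (hh : ∀ i, ‖h i‖ ≤ C) : ‖∑' i, μ i * h i‖ ≤ (∑' i, ‖μ i‖) * C :=
  tsum_of_norm_bounded (hμ.hasSum.mul_right C) fun i => norm_mul_le_of_le le_rfl (hh i)

namespace IsContractionKernel

variable {K : ι → κ → R} {μ : ι → R}

theorem tsum_norm_mul_row_le (hK : IsContractionKernel K) (a : R) (i : ι) :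
    ∑' j, ‖a * K i j‖ ≤ ‖a‖ := by
  have hrow : Summable fun j => ‖a‖ * ‖K i j‖ := (hK.summable_norm i).mul_left _
  calc ∑' j, ‖a * K i j‖
      ≤ ∑' j, ‖a‖ * ‖K i j‖ :=
        (hrow.of_nonneg_of_le (fun _ => norm_nonneg _) fun _ => norm_mul_le _ _).tsum_le_tsum
          (fun _ => norm_mul_le _ _) hrow
    _ = ‖a‖ * ∑' j, ‖K i j‖ := tsum_mul_left
    _ ≤ ‖a‖ := mul_le_of_le_one_right (norm_nonneg _) (hK.tsum_norm_le_one i)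

theorem summable_norm_mul_prod (hK : IsContractionKernel K) (hμ : Summable fun i => ‖μ i‖) :
    Summable fun q : ι × κ => ‖μ q.1 * K q.1 q.2‖ := by
  refine (summable_prod_of_nonneg fun _ => norm_nonneg _).2 ⟨fun i => ?_, ?_⟩
  · exact ((hK.summable_norm i).mul_left ‖μ i‖).of_nonneg_of_le (fun _ => norm_nonneg _)
      fun _ => norm_mul_le _ _
  · exact hμ.of_nonneg_of_le (fun _ => tsum_nonneg fun _ => norm_nonneg _)
      fun i => hK.tsum_norm_mul_row_le (μ i) i

theorem norm_tsum_mul_le_tsum_norm (hK : IsContractionKernel K) (hμ : Summable fun i => ‖μ i‖)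
    (j : κ) : ‖∑' i, μ i * K i j‖ ≤ ∑' i, ‖μ i * K i j‖ :=
  norm_tsum_le_tsum_norm ((hK.summable_norm_mul_prod hμ).prod_symm.prod_factor j)

theorem norm_tsum_row_mul_le (hK : IsContractionKernel K) (i : ι) {h : κ → R} {C : ℝ}
    (hC : 0 ≤ C) (hh : ∀ j, ‖h j‖ ≤ C) : ‖∑' j, K i j * h j‖ ≤ C :=
  (norm_tsum_mul_le_of_norm_le (hK.summable_norm i) hh).trans
    (mul_le_of_le_one_left hC (hK.tsum_norm_le_one i))

theorem summable_norm_tsum_mul (hK : IsContractionKernel K) (hμ : Summable fun i => ‖μ i‖) :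
    Summable fun j => ‖∑' i, μ i * K i j‖ :=
  (hK.summable_norm_mul_prod hμ).prod_symm.prod.of_nonneg_of_le (fun _ => norm_nonneg _)
    (hK.norm_tsum_mul_le_tsum_norm hμ)

theorem tsum_norm_tsum_mul_le (hK : IsContractionKernel K) (hμ : Summable fun i => ‖μ i‖) :
    ∑' j, ‖∑' i, μ i * K i j‖ ≤ ∑' i, ‖μ i‖ := by
  have hprod := hK.summable_norm_mul_prod hμ
  calc ∑' j, ‖∑' i, μ i * K i j‖
      ≤ ∑' j, ∑' i, ‖μ i * K i j‖ := (hK.summable_norm_tsum_mul hμ).tsum_le_tsum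
        (hK.norm_tsum_mul_le_tsum_norm hμ) hprod.prod_symm.prod
    _ = ∑' i, ∑' j, ‖μ i * K i j‖ := hprod.tsum_comm
    _ ≤ ∑' i, ‖μ i‖ := hprod.prod.tsum_le_tsum (fun i => hK.tsum_norm_mul_row_le (μ i) i) hμ

theorem tsum_tsum_mul_mul [CompleteSpace R] (hK : IsContractionKernel K)
    (hμ : Summable fun i => ‖μ i‖) {h : κ → R} {C : ℝ} (hh : ∀ j, ‖h j‖ ≤ C) :
    ∑' j, (∑' i, μ i * K i j) * h j = ∑' i, μ i * ∑' j, K i j * h j := by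
  have hprod := hK.summable_norm_mul_prod hμ
  have htriple : Summable fun q : ι × κ => μ q.1 * K q.1 q.2 * h q.2 :=
    (summable_norm_mul_of_norm_le hprod fun q => hh q.2).of_norm
  calc ∑' j, (∑' i, μ i * K i j) * h j
      = ∑' j, ∑' i, μ i * K i j * h j := tsum_congr fun j =>
        ((hprod.of_norm.prod_symm.prod_factor j).tsum_mul_right (h j)).symm
    _ = ∑' i, ∑' j, μ i * K i j * h j := htriple.tsum_comm
    _ = ∑' i, μ i * ∑' j, K i j * h j := tsum_congr fun i => by
        simp only [mul_assoc]
        exact (summable_norm_mul_of_norm_le (hK.summable_norm i) hh).of_norm.tsum_mul_left (μ i)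

end IsContractionKernel

end Kernel

theorem norm_pow_le_one_of_norm_le_one {R : Type*} [SeminormedRing R] [NormOneClass R] {r : R}
    (hr : ‖r‖ ≤ 1) (j : ℕ) : ‖r ^ j‖ ≤ 1 :=
  (norm_pow_le r j).trans (pow_le_one₀ (norm_nonneg r) hr)

theorem hasSum_sub_mul_pow {R : Type*} [NormedCommRing R] [NormOneClass R] [CompleteSpace R]
    {u : ℕ → R} {x : R} {C : ℝ} (hx : ‖x‖ < 1) (hu : ∀ k, ‖u k‖ ≤ C) :
    HasSum (fun k => (u k - x * u (k + 1)) * x ^ k) (u 0) := by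
  have hsum : Summable fun k => x ^ k * u k :=
    (summable_norm_mul_of_norm_le (summable_norm_geometric_of_norm_lt_one hx) hu).of_norm
  have hshift : HasSum (fun k => x ^ (k + 1) * u (k + 1)) (∑' k, x ^ k * u k - u 0) := by
    simpa using (hasSum_nat_add_iff' 1).2 hsum.hasSum
  rw [← sub_sub_cancel (∑' k, x ^ k * u k) (u 0)]
  exact (hsum.hasSum.sub hshift).congr_fun fun k => by ring

section Walk

variable {p : ℕ → ℝ}

theorem hasSum_Ptrans_succ_mul (p f : ℕ → ℝ) (i : ℕ) :
    HasSum (fun j => Ptrans p (i + 1) j * f j) ((f i + f (i + 2)) / 2) := by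
  have hsupport : ∀ j ∉ ({i, i + 2} : Finset ℕ), Ptrans p (i + 1) j * f j = 0 := by
    simp_all [Ptrans]
  have hsum : HasSum (fun j => Ptrans p (i + 1) j * f j) _ := hasSum_sum_of_ne_finset_zero hsupport
  convert hsum using 1
  rw [Finset.sum_pair (by lia)]
  simp only [Ptrans, true_or, or_true, if_true]
  ring

theorem hasSum_norm_Ptrans_succ (p : ℕ → ℝ) (i : ℕ) :
    HasSum (fun j => ‖Ptrans p (i + 1) j‖) 1 := by
  convert hasSum_Ptrans_succ_mul p (fun _ => 1) i using 1
  · ext j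
    simp only [Ptrans]
    split_ifs <;> norm_num
  · norm_num

theorem isContractionKernel_Ptrans (hp : Summable p) (hp1 : ∑' j, |p j| ≤ 1) :
    IsContractionKernel (Ptrans p) where
  summable_norm
    | 0 => hp.norm
    | i + 1 => (hasSum_norm_Ptrans_succ p i).summable
  tsum_norm_le_one
    | 0 => hp1
    | i + 1 => (hasSum_norm_Ptrans_succ p i).tsum_eq.le

theorem tsum_occ_zero_mul (p : ℕ → ℝ) (i₀ : ℕ) (h : ℕ → ℝ) :
    ∑' j, occ p i₀ 0 j * h j = h i₀ := by
  simp [occ]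

theorem hasSum_norm_occ_zero (p : ℕ → ℝ) (i₀ : ℕ) : HasSum (fun j => ‖occ p i₀ 0 j‖) 1 := by
  convert hasSum_ite_eq i₀ (1 : ℝ) using 2 with j
  simp only [occ]
  split_ifs <;> norm_num

theorem summable_norm_occ (hP : IsContractionKernel (Ptrans p)) (i₀ : ℕ) :
    ∀ k, Summable fun j => ‖occ p i₀ k j‖
  | 0 => (hasSum_norm_occ_zero p i₀).summable
  | k + 1 => hP.summable_norm_tsum_mul (summable_norm_occ hP i₀ k)

theorem tsum_norm_occ_le_one (hP : IsContractionKernel (Ptrans p)) (i₀ : ℕ) :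
    ∀ k, ∑' j, ‖occ p i₀ k j‖ ≤ 1
  | 0 => (hasSum_norm_occ_zero p i₀).tsum_eq.le
  | k + 1 => (hP.tsum_norm_tsum_mul_le (summable_norm_occ hP i₀ k)).trans
      (tsum_norm_occ_le_one hP i₀ k)

theorem norm_tsum_occ_mul_le (hP : IsContractionKernel (Ptrans p)) (i₀ k : ℕ) {h : ℕ → ℝ}
    {C : ℝ} (hh : ∀ j, ‖h j‖ ≤ C) : ‖∑' j, occ p i₀ k j * h j‖ ≤ C :=
  (norm_tsum_mul_le_of_norm_le (summable_norm_occ hP i₀ k) hh).trans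
    (mul_le_of_le_one_left ((norm_nonneg _).trans (hh 0)) (tsum_norm_occ_le_one hP i₀ k))

variable {x r : ℝ}

theorem pow_sub_mul_tsum_Ptrans_mul_pow (p : ℕ → ℝ) (hr : x * (1 + r ^ 2) = 2 * r) (i : ℕ) :
    r ^ i - x * ∑' j, Ptrans p i j * r ^ j =
      if i = 0 then 1 - x * ∑' j, p j * r ^ j else 0 := by
  cases i with
  | zero => simp [Ptrans]
  | succ i =>
    rw [(hasSum_Ptrans_succ_mul p (r ^ ·) i).tsum_eq, if_neg i.succ_ne_zero]
    linear_combination -(r ^ i / 2) * hr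

theorem occ_mul_eq_tsum_sub_mul_tsum (hP : IsContractionKernel (Ptrans p)) (i₀ k : ℕ)
    (hr : x * (1 + r ^ 2) = 2 * r) (hr1 : |r| ≤ 1) :
    occ p i₀ k 0 * (1 - x * ∑' j, p j * r ^ j) =
      ∑' i, occ p i₀ k i * r ^ i - x * ∑' i, occ p i₀ (k + 1) i * r ^ i := by
  have hpow : ∀ j, ‖r ^ j‖ ≤ 1 := norm_pow_le_one_of_norm_le_one hr1
  have hrow : ∀ i, ‖∑' j, Ptrans p i j * r ^ j‖ ≤ 1 := fun i =>
    hP.norm_tsum_row_mul_le i zero_le_one hpow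
  have hocc := summable_norm_occ hP i₀ k
  have hadjoint : ∑' i, occ p i₀ (k + 1) i * r ^ i =
      ∑' i, occ p i₀ k i * ∑' j, Ptrans p i j * r ^ j := hP.tsum_tsum_mul_mul hocc hpow
  have hsub := ((summable_norm_mul_of_norm_le hocc hpow).of_norm.hasSum.sub
    ((summable_norm_mul_of_norm_le hocc hrow).of_norm.hasSum.mul_left x)).tsum_eq
  rw [hadjoint, ← hsub]
  simp only [mul_left_comm x, ← mul_sub, pow_sub_mul_tsum_Ptrans_mul_pow p hr, mul_ite, mul_zero,
    tsum_ite_eq]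

theorem hasSum_occ_mul_pow (hP : IsContractionKernel (Ptrans p)) (i₀ : ℕ) (hx : |x| < 1)
    (hr : x * (1 + r ^ 2) = 2 * r) (hr1 : |r| ≤ 1) :
    HasSum (fun k => occ p i₀ k 0 * x ^ k) (r ^ i₀ / (1 - x * ∑' j, p j * r ^ j)) := by
  have hpow : ∀ j, ‖r ^ j‖ ≤ 1 := norm_pow_le_one_of_norm_le_one hr1
  have hG : |∑' j, p j * r ^ j| ≤ 1 := hP.norm_tsum_row_mul_le 0 zero_le_one hpow
  have hxG : x * ∑' j, p j * r ^ j < 1 := (le_abs_self _).trans_lt <| by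
    rw [abs_mul]
    exact mul_lt_one_of_nonneg_of_lt_one_left (abs_nonneg x) hx hG
  have htelescope := hasSum_sub_mul_pow hx fun k => norm_tsum_occ_mul_le hP i₀ k hpow
  rw [tsum_occ_zero_mul] at htelescope
  refine (htelescope.div_const (1 - x * ∑' j, p j * r ^ j)).congr_fun fun k => ?_
  rw [← occ_mul_eq_tsum_sub_mul_tsum hP i₀ k hr hr1, mul_right_comm,
    mul_div_cancel_right₀ _ (sub_pos.2 hxG).ne']

end Walk

section HittingRoot

/-- The root of `x * (1 + r ^ 2) = 2 * r` in the unit disc, for `0 < |x| < 1`. It is the generating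
function at `x` of the time at which simple random walk started at `1` first hits `0`. -/
noncomputable def hittingRoot (x : ℝ) : ℝ :=
  (1 - √(1 - x ^ 2)) / x

variable {x : ℝ}

theorem sq_sqrt_one_sub_sq (hx1 : |x| ≤ 1) : √(1 - x ^ 2) ^ 2 = 1 - x ^ 2 :=
  Real.sq_sqrt (sub_nonneg.2 ((sq_le_one_iff_abs_le_one x).2 hx1))

theorem mul_one_add_hittingRoot_sq (hx0 : x ≠ 0) (hx1 : |x| ≤ 1) :
    x * (1 + hittingRoot x ^ 2) = 2 * hittingRoot x := by
  have hsq := sq_sqrt_one_sub_sq hx1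
  unfold hittingRoot
  field_simp
  linear_combination hsq

theorem abs_hittingRoot_le_one (hx1 : |x| ≤ 1) : |hittingRoot x| ≤ 1 := by
  have hsq := sq_sqrt_one_sub_sq hx1
  have hsqrt : √(1 - x ^ 2) ≤ 1 := Real.sqrt_le_one.2 (sub_le_self 1 (sq_nonneg x))
  have hnum : |1 - √(1 - x ^ 2)| ≤ |x| := sq_le_sq.1 <| by
    nlinarith [mul_nonneg (Real.sqrt_nonneg (1 - x ^ 2)) (sub_nonneg.2 hsqrt)]
  rw [hittingRoot, abs_div]
  exact div_le_one_of_le₀ hnum (abs_nonneg x)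

end HittingRoot

theorem stmt1_general {p : ℕ → ℝ} (hp : Summable p) (hp1 : ∑' j, |p j| ≤ 1) (i₀ : ℕ) {x : ℝ}
    (hx0 : x ≠ 0) (hx1 : |x| < 1) :
    HasSum (fun k => occ p i₀ k 0 * x ^ k)
      (((1 - √(1 - x ^ 2)) / x) ^ i₀ / (1 - x * ∑' k, p k * ((1 - √(1 - x ^ 2)) / x) ^ k)) :=
  hasSum_occ_mul_pow (isContractionKernel_Ptrans hp hp1) i₀ hx1
    (mul_one_add_hittingRoot_sq hx0 hx1.le) (abs_hittingRoot_le_one hx1.le)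

/-- The generating function `F(x) = ∑ₖ aₖ xᵏ` of the occupation probabilities
`aₖ = μₖ(0)` of the boundary random walk started at `0` converges for
`x ∈ (0,1)` and equals `1 / (1 - x ∑ₖ 𝔭ₖ ((1 - √(1 - x²))/x)ᵏ)`. -/
theorem stmt1 (p : ℕ → ℝ) (hp0 : ∀ j, 0 ≤ p j) (hpsum : Summable p)
    (hp1 : ∑' j : ℕ, p j ≤ 1) (x : ℝ) (hx : x ∈ Set.Ioo (0 : ℝ) 1) :
    Summable (fun k : ℕ => occ p 0 k 0 * x ^ k) ∧
      ∑' k : ℕ, occ p 0 k 0 * x ^ k =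
        1 / (1 - x * ∑' k : ℕ, p k * ((1 - Real.sqrt (1 - x ^ 2)) / x) ^ k) := by
  have h := stmt1_general hpsum (by simpa only [abs_of_nonneg (hp0 _)] using hp1) 0 hx.1.ne'
    ((abs_of_pos hx.1).trans_lt hx.2)
  exact ⟨h.summable, h.tsum_eq.trans (by rw [pow_zero])⟩
end

section
/- Let (𝔭_j)_{j∈ℕ} be nonnegative reals with Σ_{j=0}^∞ 𝔭_j ≤ 1 and 𝔭₀ = 0, and let a_k := μ_k(0) be the occupation probabilities of 0 for the boundary random walk started at i₀ = 0. Then for every positive integer m, Σ_{k=0}^{m−1} a_k ≤ e / √(1 − e^{−2/m}). -/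
/-!
Away from `0` the function `i ↦ x ^ i` is an eigenfunction of the walk with eigenvalue
`(x + x⁻¹) / 2`. If `s` is the inverse of this eigenvalue, then the discounted generating functions
`s ^ k * ∑ j, μ_k(j) * x ^ j` decrease at step `k` by exactly `(1 - s * φ(x)) * s ^ k * a_k`, where
`φ` is the generating function of the jumping measure. Telescoping bounds `∑ s ^ k * a_k` by
`1 / (1 - s * φ(x))`. The root `x ≤ 1` satisfies `s * x = 1 - √(1 - s ^ 2)`, which together with
`φ(x) ≤ 𝔭₀ + (1 - 𝔭₀) * x` gives `1 - s * φ(x) ≥ (1 - 𝔭₀) * √(1 - s ^ 2)`. For `s = e ^ (-1 / m)`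
the weights `s ^ k`, `k < m`, are at least `e⁻¹`.
-/

open Finset

theorem hasSum_tsum_comm_of_nonneg {α β : Type*} {f : α → β → ℝ} {g : α → ℝ} {a : ℝ}
    (hf : ∀ i j, 0 ≤ f i j) (hrow : ∀ i, HasSum (f i) (g i)) (hg : HasSum g a) :
    HasSum (fun j => ∑' i, f i j) a := by
  have hsummable : Summable (Function.uncurry f) :=
    (summable_prod_of_nonneg fun ij => hf ij.1 ij.2).2
      ⟨fun i => (hrow i).summable, hg.summable.congr fun i => (hrow i).tsum_eq.symm⟩
  have hsum : ∑' i, ∑' j, f i j = a := by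
    simp only [fun i => (hrow i).tsum_eq, hg.tsum_eq]
  rw [← hsum, ← hsummable.tsum_comm]
  exact hsummable.prod_symm.prod.hasSum

theorem sum_range_le_exp_one_mul_sum {a : ℕ → ℝ} (ha : ∀ k, 0 ≤ a k) (m : ℕ) :
    ∑ k ∈ range m, a k ≤ Real.exp 1 * ∑ k ∈ range m, Real.exp (-1 / m) ^ k * a k := by
  rw [mul_sum]
  refine sum_le_sum fun k hk => ?_
  have hratio : (k : ℝ) / m ≤ 1 :=
    div_le_one_of_le₀ (by exact_mod_cast (mem_range.1 hk).le) m.cast_nonneg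
  have hweight : 1 ≤ Real.exp 1 * Real.exp (-1 / m) ^ k := by
    rw [← Real.exp_nat_mul, ← Real.exp_add, Real.one_le_exp_iff]
    linarith [show (k : ℝ) * (-1 / m) = -(k / m) by ring]
  simpa only [mul_assoc] using le_mul_of_one_le_left (ha k) hweight

/-- The generating function `∑ j, u j * x ^ j` of a real sequence, with the junk value `0` where the
series does not converge. -/
noncomputable def genFun (u : ℕ → ℝ) (x : ℝ) : ℝ :=
  ∑' j, u j * x ^ j

section GenFun

variable {u : ℕ → ℝ} {x : ℝ}

theorem genFun_nonneg (hu : ∀ j, 0 ≤ u j) (hx : 0 ≤ x) : 0 ≤ genFun u x :=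
  tsum_nonneg fun j => mul_nonneg (hu j) (pow_nonneg hx j)

theorem summable_mul_pow_of_nonneg (hu : ∀ j, 0 ≤ u j) (hsum : Summable u) (hx : 0 ≤ x)
    (hx1 : x ≤ 1) : Summable fun j => u j * x ^ j :=
  hsum.of_nonneg_of_le (fun j => mul_nonneg (hu j) (pow_nonneg hx j))
    fun j => mul_le_of_le_one_right (hu j) (pow_le_one₀ hx hx1)

theorem genFun_le_of_tsum_le_one (hu : ∀ j, 0 ≤ u j) (hsum : Summable u) (hu1 : ∑' j, u j ≤ 1)
    (hx : 0 ≤ x) (hx1 : x ≤ 1) : genFun u x ≤ u 0 + (1 - u 0) * x := by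
  have hsummable := summable_mul_pow_of_nonneg hu hsum hx hx1
  have htail : ∀ j, u (j + 1) * x ^ (j + 1) ≤ u (j + 1) * x := fun j =>
    mul_le_mul_of_nonneg_left (pow_le_of_le_one hx hx1 j.succ_ne_zero) (hu _)
  have hsum' : Summable fun j => u (j + 1) := (summable_nat_add_iff 1).2 hsum
  calc genFun u x = u 0 + ∑' j, u (j + 1) * x ^ (j + 1) := by
        rw [genFun, hsummable.tsum_eq_zero_add, pow_zero, mul_one]
    _ ≤ u 0 + ∑' j, u (j + 1) * x := by
        gcongr u 0 + ?_
        exact ((summable_nat_add_iff 1).2 hsummable).tsum_le_tsum htail (hsum'.mul_right x)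
    _ = u 0 + (∑' j, u (j + 1)) * x := by rw [tsum_mul_right]
    _ ≤ u 0 + (1 - u 0) * x := by
        gcongr
        linarith [hsum.tsum_eq_zero_add]

end GenFun

section BoundaryWalk

variable {p : ℕ → ℝ} {i₀ : ℕ} {x s : ℝ}

theorem Ptrans_nonneg (hp : ∀ j, 0 ≤ p j) (i j : ℕ) : 0 ≤ Ptrans p i j := by
  cases i with
  | zero => exact hp j
  | succ i =>
    rw [Ptrans]
    positivity

theorem occ_nonneg (hp : ∀ j, 0 ≤ p j) (k j : ℕ) : 0 ≤ occ p i₀ k j := by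
  induction k generalizing j with
  | zero =>
    rw [occ]
    positivity
  | succ k ih => exact tsum_nonneg fun i => mul_nonneg (ih i) (Ptrans_nonneg hp i j)

theorem hasSum_Ptrans_succ_mul_pow (hx : x ≠ 0) (i : ℕ) :
    HasSum (fun j => Ptrans p (i + 1) j * x ^ j) (x ^ (i + 1) * ((x + x⁻¹) / 2)) := by
  have hsupport : ∀ j ∉ ({i, i + 2} : Finset ℕ), Ptrans p (i + 1) j * x ^ j = 0 := by
    intro j hj
    simp only [mem_insert, mem_singleton] at hj
    rw [Ptrans, if_neg hj, zero_mul]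
  have hvalue : ∑ j ∈ {i, i + 2}, Ptrans p (i + 1) j * x ^ j =
      x ^ (i + 1) * ((x + x⁻¹) / 2) := by
    rw [sum_pair (by omega), Ptrans, Ptrans, if_pos (Or.inl rfl), if_pos (Or.inr rfl)]
    field_simp
    ring
  exact hvalue ▸ hasSum_sum_of_ne_finset_zero hsupport

theorem hasSum_Ptrans_mul_pow (hpx : Summable fun j => p j * x ^ j) (hx : x ≠ 0) (i : ℕ) :
    HasSum (fun j => Ptrans p i j * x ^ j)
      (x ^ i * ((x + x⁻¹) / 2) + if i = 0 then genFun p x - (x + x⁻¹) / 2 else 0) := by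
  cases i with
  | zero => simpa [Ptrans, genFun] using hpx.hasSum
  | succ i => simpa using hasSum_Ptrans_succ_mul_pow hx i

theorem hasSum_occ_zero_mul_pow :
    HasSum (fun j => occ p i₀ 0 j * x ^ j) (x ^ i₀) := by
  simpa [occ] using hasSum_single (f := fun j => occ p i₀ 0 j * x ^ j) i₀
    fun j hj => by simp [occ, hj]

theorem hasSum_occ_succ_mul_pow (hp : ∀ j, 0 ≤ p j) (hpx : Summable fun j => p j * x ^ j)
    (hx : 0 < x) {k : ℕ} (hk : Summable fun j => occ p i₀ k j * x ^ j) :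
    HasSum (fun j => occ p i₀ (k + 1) j * x ^ j)
      (genFun (occ p i₀ k) x * ((x + x⁻¹) / 2) +
        occ p i₀ k 0 * (genFun p x - (x + x⁻¹) / 2)) := by
  have hboundary := hasSum_ite_eq 0 (occ p i₀ k 0 * (genFun p x - (x + x⁻¹) / 2))
  have hrows : HasSum (fun i => occ p i₀ k i *
      (x ^ i * ((x + x⁻¹) / 2) + if i = 0 then genFun p x - (x + x⁻¹) / 2 else 0))
      (genFun (occ p i₀ k) x * ((x + x⁻¹) / 2) +
        occ p i₀ k 0 * (genFun p x - (x + x⁻¹) / 2)) := by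
    refine ((hk.hasSum.mul_right ((x + x⁻¹) / 2)).add hboundary).congr_fun fun i => ?_
    split_ifs with hi
    · subst hi
      ring
    · ring
  have hswap := hasSum_tsum_comm_of_nonneg
    (fun i j => mul_nonneg (occ_nonneg hp k i)
      (mul_nonneg (Ptrans_nonneg hp i j) (pow_nonneg hx.le j)))
    (fun i => (hasSum_Ptrans_mul_pow hpx hx.ne' i).mul_left (occ p i₀ k i)) hrows
  simpa only [occ, ← mul_assoc, tsum_mul_right] using hswap

theorem summable_occ_mul_pow (hp : ∀ j, 0 ≤ p j) (hpx : Summable fun j => p j * x ^ j)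
    (hx : 0 < x) (k : ℕ) : Summable fun j => occ p i₀ k j * x ^ j := by
  induction k with
  | zero => exact hasSum_occ_zero_mul_pow.summable
  | succ k ih => exact (hasSum_occ_succ_mul_pow hp hpx hx ih).summable

theorem pow_mul_genFun_occ_add_sum (hp : ∀ j, 0 ≤ p j) (hpx : Summable fun j => p j * x ^ j)
    (hx : 0 < x) (hs : s * ((x + x⁻¹) / 2) = 1) (m : ℕ) :
    s ^ m * genFun (occ p i₀ m) x +
      (1 - s * genFun p x) * ∑ k ∈ range m, s ^ k * occ p i₀ k 0 = x ^ i₀ := by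
  induction m with
  | zero => simpa [genFun] using hasSum_occ_zero_mul_pow.tsum_eq
  | succ m ih =>
    have hstep := (hasSum_occ_succ_mul_pow hp hpx hx
      (summable_occ_mul_pow (i₀ := i₀) hp hpx hx m)).tsum_eq
    rw [← ih, sum_range_succ, genFun, hstep]
    linear_combination (s ^ m * genFun (occ p i₀ m) x - s ^ m * occ p i₀ m 0) * hs

theorem one_sub_mul_genFun_mul_sum_le_one (hp : ∀ j, 0 ≤ p j) (hsum : Summable p)
    (hx : 0 < x) (hx1 : x ≤ 1) (hs : s * ((x + x⁻¹) / 2) = 1) (m : ℕ) :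
    (1 - s * genFun p x) * ∑ k ∈ range m, s ^ k * occ p i₀ k 0 ≤ 1 := by
  have hs0 : 0 < s := (pos_iff_pos_of_mul_pos (hs ▸ one_pos)).2 (by positivity)
  have htelescope := pow_mul_genFun_occ_add_sum (i₀ := i₀) hp
    (summable_mul_pow_of_nonneg hp hsum hx.le hx1) hx hs m
  have hremainder : 0 ≤ s ^ m * genFun (occ p i₀ m) x :=
    mul_nonneg (pow_nonneg hs0.le m) (genFun_nonneg (occ_nonneg hp m) hx.le)
  linarith [pow_le_one₀ (n := i₀) hx.le hx1]

end BoundaryWalk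

/-- The generating function `s ↦ E[s ^ τ]` of the time `τ` at which simple random walk started at
`1` hits `0`, given by its closed form: for `0 < s ≤ 1` it is the root in
`(0, 1]` of `s * ((x + x⁻¹) / 2) = 1`. -/
noncomputable def hittingGenFun (s : ℝ) : ℝ :=
  (1 - √(1 - s ^ 2)) / s

section HittingGenFun

variable {s : ℝ}

theorem mul_hittingGenFun (hs : s ≠ 0) : s * hittingGenFun s = 1 - √(1 - s ^ 2) :=
  mul_div_cancel₀ _ hs

theorem hittingGenFun_pos (hs : 0 < s) : 0 < hittingGenFun s := by
  refine div_pos (sub_pos.2 ?_) hs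
  rw [Real.sqrt_lt' one_pos]
  linarith [pow_pos hs 2]

theorem hittingGenFun_le_one (hs : 0 < s) (hs1 : s ≤ 1) : hittingGenFun s ≤ 1 := by
  rw [hittingGenFun, div_le_one hs, sub_le_comm]
  exact Real.le_sqrt_of_sq_le (by nlinarith)

theorem mul_hittingGenFun_add_inv_div_two (hs : 0 < s) (hs1 : s ≤ 1) :
    s * ((hittingGenFun s + (hittingGenFun s)⁻¹) / 2) = 1 := by
  have hx := (hittingGenFun_pos hs).ne'
  have hsq : √(1 - s ^ 2) ^ 2 = 1 - s ^ 2 := Real.sq_sqrt (by nlinarith)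
  have hroot : s * (hittingGenFun s ^ 2 + 1) = 2 * hittingGenFun s := by
    rw [hittingGenFun]
    field_simp
    linear_combination hsq
  field_simp
  linear_combination hroot

end HittingGenFun

section DiscountedOccupation

variable {p : ℕ → ℝ} {i₀ : ℕ} {s : ℝ}

theorem one_sub_mul_sqrt_le_one_sub_mul_genFun (hp : ∀ j, 0 ≤ p j) (hsum : Summable p)
    (hp1 : ∑' j, p j ≤ 1) (hs : 0 < s) (hs1 : s ≤ 1) :
    (1 - p 0) * √(1 - s ^ 2) ≤ 1 - s * genFun p (hittingGenFun s) := by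
  have hgen := genFun_le_of_tsum_le_one hp hsum hp1 (hittingGenFun_pos hs).le
    (hittingGenFun_le_one hs hs1)
  calc (1 - p 0) * √(1 - s ^ 2)
      ≤ (1 - p 0) * √(1 - s ^ 2) + p 0 * (1 - s) :=
        le_add_of_nonneg_right (mul_nonneg (hp 0) (sub_nonneg.2 hs1))
    _ = 1 - s * (p 0 + (1 - p 0) * hittingGenFun s) := by
        linear_combination (1 - p 0) * mul_hittingGenFun hs.ne'
    _ ≤ 1 - s * genFun p (hittingGenFun s) := by gcongr

theorem one_sub_mul_sqrt_mul_sum_pow_mul_occ_le_one (hp : ∀ j, 0 ≤ p j) (hsum : Summable p)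
    (hp1 : ∑' j, p j ≤ 1) (hs : 0 < s) (hs1 : s ≤ 1) (m : ℕ) :
    (1 - p 0) * √(1 - s ^ 2) * ∑ k ∈ range m, s ^ k * occ p i₀ k 0 ≤ 1 := by
  have hsum_nonneg : 0 ≤ ∑ k ∈ range m, s ^ k * occ p i₀ k 0 :=
    sum_nonneg fun k _ => mul_nonneg (pow_nonneg hs.le k) (occ_nonneg hp k 0)
  exact (mul_le_mul_of_nonneg_right
      (one_sub_mul_sqrt_le_one_sub_mul_genFun hp hsum hp1 hs hs1) hsum_nonneg).trans
    (one_sub_mul_genFun_mul_sum_le_one hp hsum (hittingGenFun_pos hs)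
      (hittingGenFun_le_one hs hs1) (mul_hittingGenFun_add_inv_div_two hs hs1) m)

end DiscountedOccupation

theorem stmt2_general (p : ℕ → ℝ) (hp0 : ∀ j, 0 ≤ p j) (hpsum : Summable p)
    (hp1 : ∑' j : ℕ, p j ≤ 1) (i₀ m : ℕ) (hm : 0 < m) :
    (1 - p 0) * ∑ k ∈ range m, occ p i₀ k 0 ≤
      Real.exp 1 / √(1 - Real.exp (-2 / (m : ℝ))) := by
  have hm' : (0 : ℝ) < m := Nat.cast_pos.2 hm
  have hp0_le : p 0 ≤ 1 := (hpsum.le_tsum 0 fun j _ => hp0 j).trans hp1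
  set s := Real.exp (-1 / (m : ℝ)) with hs_def
  have hs1 : s < 1 := Real.exp_lt_one_iff.2 (div_neg_of_neg_of_pos (by norm_num) hm')
  have hs_sq : Real.exp (-2 / (m : ℝ)) = s ^ 2 := by
    rw [hs_def, ← Real.exp_nat_mul]
    ring_nf
  have hsqrt : 0 < √(1 - s ^ 2) :=
    Real.sqrt_pos.2 (sub_pos.2 (pow_lt_one₀ (Real.exp_pos _).le hs1 two_ne_zero))
  rw [hs_sq, le_div_iff₀ hsqrt]
  calc (1 - p 0) * (∑ k ∈ range m, occ p i₀ k 0) * √(1 - s ^ 2)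
      ≤ (1 - p 0) * (Real.exp 1 * ∑ k ∈ range m, s ^ k * occ p i₀ k 0) * √(1 - s ^ 2) := by
        gcongr
        exact sum_range_le_exp_one_mul_sum (fun k => occ_nonneg hp0 k 0) m
    _ = Real.exp 1 *
          ((1 - p 0) * √(1 - s ^ 2) * ∑ k ∈ range m, s ^ k * occ p i₀ k 0) := by ring
    _ ≤ Real.exp 1 := mul_le_of_le_one_right (Real.exp_pos 1).le
        (one_sub_mul_sqrt_mul_sum_pow_mul_occ_le_one hp0 hpsum hp1 (Real.exp_pos _) hs1.le m)

/-- If `𝔭₀ = 0`, then the expected time spent at `0` during the first `m` steps of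
the boundary random walk started at `0` is at most `e / √(1 - e^{-2/m})`. -/
theorem stmt2 (p : ℕ → ℝ) (hp0 : ∀ j, 0 ≤ p j) (hpsum : Summable p)
    (hp1 : ∑' j : ℕ, p j ≤ 1) (hp00 : p 0 = 0)
    (m : ℕ) (hm : 0 < m) :
    ∑ k ∈ Finset.range m, occ p 0 k 0 ≤
      Real.exp 1 / Real.sqrt (1 - Real.exp (-2 / (m : ℝ))) := by
  simpa only [hp00, sub_zero, one_mul] using stmt2_general p hp0 hpsum hp1 0 m hm
end

section
/- Let p₁, p₂ ≥ 0 and p₃ > 0 be constants, and let μ be a nonnegative Borel measure on ℝ carried by (0,∞) with I := ∫_{(0,∞)} min(x,1) dμ(x) < ∞. Let f : ℝ → ℝ satisfy |f(x)| ≤ F₀ for all x ≥ 0 and |f(x) − f(y)| ≤ F₁ |x − y| for all x, y ≥ 0. For each integer n ≥ 2 define D_n := −(p₁/(n² p₃)) f(0) + (p₂/(n p₃)) (f(1/n) − f(0)) + Σ_{j=2}^{n²−1} (μ((j/n,(j+1)/n])/(n² p₃)) (f(j/n) − f(0)). Then |D_n| ≤ (p₁ F₀ + p₂ F₁ + (2F₀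 + F₁) I)/(n² p₃). -/
open MeasureTheory

/-!
After multiplication by `n² p₃` the three terms of `D_n` are estimated separately. The killing term
is at most `p₁ F₀` and the drift term at most `p₂ n · F₁ (1/n) = p₂ F₁`. For the jumps, boundedness
and the Lipschitz condition combine into `|f x - f 0| ≤ max (2F₀) F₁ · min x 1`; since `min x 1` is
monotone, its value at the left endpoint of a cell times the mass of the cell is at most its
integral over the cell, and the disjoint cells together contribute at most the integral over
`(0, ∞)`.
-/

section Integral

variable {α : Type*} [MeasurableSpace α] {μ : Measure α} {g : α → ℝ} {s t : Set α}

theorem mul_measureReal_le_setIntegral {c : ℝ} (hs : MeasurableSet s) (hc : 0 ≤ c)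
    (hcg : ∀ x ∈ s, c ≤ g x) (hg : IntegrableOn g s μ) : c * μ.real s ≤ ∫ x in s, g x ∂μ := by
  by_cases hμs : μ s = ⊤
  · rw [measureReal_def, hμs, ENNReal.toReal_top, mul_zero]
    exact setIntegral_nonneg hs fun x hx => hc.trans (hcg x hx)
  · exact setIntegral_ge_of_const_le_real hs hμs hcg hg

variable {ι : Type*} {A : ι → Set α} {J : Finset ι}

theorem sum_setIntegral_le_of_pairwiseDisjoint (hg : IntegrableOn g t μ)
    (hg_nonneg : 0 ≤ᵐ[μ.restrict t] g) (hA : ∀ j ∈ J, MeasurableSet (A j))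
    (hAt : ∀ j ∈ J, A j ⊆ t) (hdisj : (J : Set ι).PairwiseDisjoint A) :
    ∑ j ∈ J, ∫ x in A j, g x ∂μ ≤ ∫ x in t, g x ∂μ := by
  rw [← integral_biUnion_finset J hA hdisj fun j hj => hg.mono_set (hAt j hj)]
  exact setIntegral_mono_set hg hg_nonneg (Set.iUnion₂_subset hAt).eventuallyLE

theorem norm_sum_measureReal_smul_le_mul_setIntegral {E : Type*} [SeminormedAddCommGroup E]
    [NormedSpace ℝ E] {v : ι → E} {c : ι → ℝ} {C : ℝ} (hC : 0 ≤ C) (hg : IntegrableOn g t μ)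
    (hg_nonneg : 0 ≤ᵐ[μ.restrict t] g) (hA : ∀ j ∈ J, MeasurableSet (A j))
    (hAt : ∀ j ∈ J, A j ⊆ t) (hdisj : (J : Set ι).PairwiseDisjoint A)
    (hc : ∀ j ∈ J, 0 ≤ c j) (hcg : ∀ j ∈ J, ∀ x ∈ A j, c j ≤ g x)
    (hv : ∀ j ∈ J, ‖v j‖ ≤ C * c j) :
    ‖∑ j ∈ J, μ.real (A j) • v j‖ ≤ C * ∫ x in t, g x ∂μ := by
  have norm_term_le : ∀ j ∈ J, ‖μ.real (A j) • v j‖ ≤ C * ∫ x in A j, g x ∂μ := fun j hj =>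
    calc ‖μ.real (A j) • v j‖ = μ.real (A j) * ‖v j‖ := norm_smul_of_nonneg measureReal_nonneg _
      _ ≤ μ.real (A j) * (C * c j) := by gcongr; exact hv j hj
      _ = C * (c j * μ.real (A j)) := by ring
      _ ≤ C * ∫ x in A j, g x ∂μ := by
        gcongr
        exact mul_measureReal_le_setIntegral (hA j hj) (hc j hj) (hcg j hj)
          (hg.mono_set (hAt j hj))
  calc ‖∑ j ∈ J, μ.real (A j) • v j‖ ≤ ∑ j ∈ J, C * ∫ x in A j, g x ∂μ :=
        norm_sum_le_of_le J norm_term_le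
    _ = C * ∑ j ∈ J, ∫ x in A j, g x ∂μ := (Finset.mul_sum ..).symm
    _ ≤ C * ∫ x in t, g x ∂μ := by
      gcongr
      exact sum_setIntegral_le_of_pairwiseDisjoint hg hg_nonneg hA hAt hdisj

end Integral

section BoundaryEstimate

variable {E : Type*} [SeminormedAddCommGroup E]

theorem norm_sub_le_max_mul_min {a b : E} {F₀ F₁ d : ℝ} (hd : 0 ≤ d) (ha : ‖a‖ ≤ F₀)
    (hb : ‖b‖ ≤ F₀) (hab : ‖a - b‖ ≤ F₁ * d) : ‖a - b‖ ≤ max (2 * F₀) F₁ * min d 1 := by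
  rcases min_choice d 1 with hmin | hmin <;> rw [hmin]
  · exact hab.trans (mul_le_mul_of_nonneg_right (le_max_right _ _) hd)
  · rw [mul_one]
    exact (norm_sub_le_of_le ha hb).trans ((two_mul F₀).ge.trans (le_max_left _ _))

variable [NormedSpace ℝ E] {f : ℝ → E} {F₀ F₁ : ℝ} {μ : Measure ℝ}

theorem norm_sum_measureReal_Ioc_smul_sub_le (hI : IntegrableOn (fun x => min x 1) (Set.Ioi 0) μ)
    (hF₀ : ∀ x, 0 ≤ x → ‖f x‖ ≤ F₀) (hF₁ : ∀ x, 0 ≤ x → ‖f x - f 0‖ ≤ F₁ * x)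
    {x : ℕ → ℝ} (hx : Monotone x) (hx_nonneg : ∀ j, 0 ≤ x j) (J : Finset ℕ) :
    ‖∑ j ∈ J, μ.real (Set.Ioc (x j) (x (j + 1))) • (f (x j) - f 0)‖
      ≤ max (2 * F₀) F₁ * ∫ y in Set.Ioi 0, min y 1 ∂μ := by
  have hF₀_nonneg : 0 ≤ F₀ := (norm_nonneg _).trans (hF₀ 0 le_rfl)
  have min_nonneg_ae : 0 ≤ᵐ[μ.restrict (Set.Ioi 0)] fun y => min y 1 :=
    ae_restrict_of_forall_mem measurableSet_Ioi fun y hy => le_min (le_of_lt hy) zero_le_one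
  exact norm_sum_measureReal_smul_le_mul_setIntegral (c := fun j => min (x j) 1)
    (le_max_of_le_left (by positivity)) hI min_nonneg_ae
    (fun _ _ => measurableSet_Ioc)
    (fun j _ _ hy => (hx_nonneg j).trans_lt hy.1)
    (hx.pairwise_disjoint_on_Ioc_succ.set_pairwise _)
    (fun j _ => le_min (hx_nonneg j) zero_le_one)
    (fun _ _ _ hy => min_le_min_right 1 hy.1.le)
    (fun j _ => norm_sub_le_max_mul_min (hx_nonneg j) (hF₀ _ (hx_nonneg j)) (hF₀ 0 le_rfl)
      (hF₁ _ (hx_nonneg j)))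

theorem stmt8_general {p₁ p₂ p₃ : ℝ} (hp₁ : 0 ≤ p₁) (hp₂ : 0 ≤ p₂) (hp₃ : 0 < p₃)
    (hI : IntegrableOn (fun x => min x 1) (Set.Ioi 0) μ)
    (hF₀ : ∀ x, 0 ≤ x → ‖f x‖ ≤ F₀) (hF₁ : ∀ x, 0 ≤ x → ‖f x - f 0‖ ≤ F₁ * x)
    {n : ℝ} (hn : 0 < n) (J : Finset ℕ) :
    ‖-(p₁ / (n ^ 2 * p₃)) • f 0 + (p₂ / (n * p₃)) • (f (1 / n) - f 0)
        + ∑ j ∈ J, (μ.real (Set.Ioc (j / n) ((j + 1) / n)) / (n ^ 2 * p₃)) • (f (j / n) - f 0)‖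
      ≤ (p₁ * F₀ + p₂ * F₁ + (2 * F₀ + F₁) * ∫ x in Set.Ioi 0, min x 1 ∂μ) / (n ^ 2 * p₃) := by
  set I := ∫ x in Set.Ioi 0, min x 1 ∂μ
  have hF₀_nonneg : 0 ≤ F₀ := (norm_nonneg _).trans (hF₀ 0 le_rfl)
  have hF₁_nonneg : 0 ≤ F₁ := by simpa using (norm_nonneg _).trans (hF₁ 1 zero_le_one)
  have hI_nonneg : 0 ≤ I :=
    setIntegral_nonneg measurableSet_Ioi fun x hx => le_min (le_of_lt hx) zero_le_one
  have killing_le : ‖p₁ • -f 0‖ ≤ p₁ * F₀ := by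
    rw [norm_smul_of_nonneg hp₁, norm_neg]
    exact mul_le_mul_of_nonneg_left (hF₀ 0 le_rfl) hp₁
  have drift_le : ‖(p₂ * n) • (f (1 / n) - f 0)‖ ≤ p₂ * F₁ :=
    calc ‖(p₂ * n) • (f (1 / n) - f 0)‖ = p₂ * n * ‖f (1 / n) - f 0‖ :=
          norm_smul_of_nonneg (by positivity) _
      _ ≤ p₂ * n * (F₁ * (1 / n)) := by gcongr; exact hF₁ _ (by positivity)
      _ = p₂ * F₁ := by field_simp
  have jumps_le : ‖∑ j ∈ J, μ.real (Set.Ioc (j / n) ((j + 1) / n)) • (f (j / n) - f 0)‖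
      ≤ (2 * F₀ + F₁) * I := by
    have grid_monotone : Monotone fun j : ℕ => (j : ℝ) / n := Nat.mono_cast.div_const hn.le
    have le_max_mul := norm_sum_measureReal_Ioc_smul_sub_le hI hF₀ hF₁ grid_monotone
      (fun j => by positivity) J
    push_cast at le_max_mul
    exact le_max_mul.trans (by gcongr; exact max_le_add_of_nonneg (by positivity) hF₁_nonneg)
  have drift_coeff : p₂ / (n * p₃) = (n ^ 2 * p₃)⁻¹ * (p₂ * n) := by field_simp
  simp only [drift_coeff, div_eq_inv_mul _ (n ^ 2 * p₃), mul_smul (n ^ 2 * p₃)⁻¹, neg_smul,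
    ← smul_neg, ← Finset.smul_sum, ← smul_add]
  rw [norm_smul_of_nonneg (by positivity)]
  gcongr
  exact norm_add_le_of_le (norm_add_le_of_le killing_le drift_le) jumps_le

end BoundaryEstimate

/-- Boundary estimate for the generator of the rescaled boundary random walk
(case `p₃ ≠ 0`): with `D_n := -(p₁/(n²p₃)) f(0) + (p₂/(np₃))(f(1/n) - f(0))
+ ∑_{j=2}^{n²-1} (μ((j/n,(j+1)/n])/(n²p₃))(f(j/n) - f(0))`, one has
`|D_n| ≤ (p₁F₀ + p₂F₁ + (2F₀+F₁)∫min(x,1)dμ)/(n²p₃)`. -/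
theorem stmt8 (p₁ p₂ p₃ : ℝ) (hp₁ : 0 ≤ p₁) (hp₂ : 0 ≤ p₂) (hp₃ : 0 < p₃)
    (μ : Measure ℝ) (hcar : μ (Set.Iic 0) = 0)
    (hI : IntegrableOn (fun x => min x 1) (Set.Ioi 0) μ)
    (f : ℝ → ℝ) (F₀ F₁ : ℝ)
    (hF₀ : ∀ x : ℝ, 0 ≤ x → |f x| ≤ F₀)
    (hF₁ : ∀ x y : ℝ, 0 ≤ x → 0 ≤ y → |f x - f y| ≤ F₁ * |x - y|)
    (n : ℕ) (hn : 2 ≤ n) :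
    |(-(p₁ / ((n : ℝ) ^ 2 * p₃)) * f 0
        + p₂ / ((n : ℝ) * p₃) * (f (1 / (n : ℝ)) - f 0)
        + ∑ j ∈ Finset.Icc (2 : ℕ) (n ^ 2 - 1),
            (μ (Set.Ioc ((j : ℝ) / (n : ℝ)) (((j : ℝ) + 1) / (n : ℝ)))).toReal /
                ((n : ℝ) ^ 2 * p₃) * (f ((j : ℝ) / (n : ℝ)) - f 0))|
      ≤ (p₁ * F₀ + p₂ * F₁ + (2 * F₀ + F₁) * ∫ x in Set.Ioi (0 : ℝ), min x 1 ∂μ) /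
          ((n : ℝ) ^ 2 * p₃) := by
  have hF₁_zero (x : ℝ) (hx : 0 ≤ x) : ‖f x - f 0‖ ≤ F₁ * x := by
    simpa [abs_of_nonneg hx] using hF₁ x 0 hx le_rfl
  exact stmt8_general (f := f) hp₁ hp₂ hp₃ hI hF₀ hF₁_zero (Nat.cast_pos.2 (by lia : 0 < n)) _
end

section
/- Let p₁, p₂ ≥ 0 and p₃ > 0 be constants, and let μ be a nonnegative Borel measure on ℝ carried by (0,∞) with ∫_{(0,∞)} min(x,1) dμ(x) < ∞. Let f : ℝ → ℝ be continuous on [0,∞), satisfy |f(x) − f(0)| ≤ C min(x,1) for all x ≥ 0 for some constant C, and be right-differentiable at 0 with right derivative f'(0). For each integer n ≥ 2 define D_n := −(p₁/(n² p₃)) f(0) + (p₂/(n p₃)) (f(1/n) − f(0)) + Σ_{j=2}^{n²−1} (μ((j/n,(j+1)/n])/(n² p₃)) (f(j/n) − f(0)). Then lim_{n→∞} n² D_n = (−p₁ f(0) + p₂ f'(0) + ∫_{(0,∞)} (f(x) − f(0)) dμ(x)) / p₃. -/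
open MeasureTheory

/-!
The `p₂`-term is a difference quotient at `0`. The jump sum is the integral over `(0, ∞)` of the
step function equal to `f (j / n) - f 0` on the cell `(j / n, (j + 1) / n]`. As `n → ∞` the left
endpoint of the cell containing `x` tends to `x`, which gives pointwise convergence. Sampling at
left endpoints also keeps each step function below any monotone bound of `f - f 0`, so dominated
convergence applies.
-/

open Filter Set Topology

/-- The cell `(j / n, (j + 1) / n]` of the grid of mesh `1 / n`; empty for `n = 0`. -/
def gridCell (n j : ℕ) : Set ℝ := Ioc ((j : ℝ) / n) (((j : ℝ) + 1) / n)

/-- The index `j` of the cell `(j / n, (j + 1) / n]` containing `x`, for `0 < x` and `n ≠ 0`.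
The subtraction is truncated, so the index is `0` when `x ≤ 0` or `n = 0`. -/
noncomputable def gridIndex (n : ℕ) (x : ℝ) : ℕ := ⌈n * x⌉₊ - 1

theorem measurableSet_gridCell (n j : ℕ) : MeasurableSet (gridCell n j) :=
  measurableSet_Ioc

theorem measureReal_restrict_Ioi_gridCell (μ : Measure ℝ) (n j : ℕ) :
    (μ.restrict (Ioi 0)).real (gridCell n j) = μ.real (gridCell n j) := by
  have hsub : gridCell n j ⊆ Ioi 0 := fun x hx => lt_of_le_of_lt (by positivity) hx.1
  rw [measureReal_restrict_apply (measurableSet_gridCell n j), inter_eq_left.2 hsub]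

section Grid

variable {n : ℕ} {x : ℝ}

theorem gridIndex_add_one (hn : n ≠ 0) (hx : 0 < x) : gridIndex n x + 1 = ⌈n * x⌉₊ :=
  Nat.sub_add_cancel (Nat.ceil_pos.2 (by positivity))

theorem mem_gridCell_iff (hn : n ≠ 0) (hx : 0 < x) {j : ℕ} :
    x ∈ gridCell n j ↔ j = gridIndex n x := by
  have hn' : (0 : ℝ) < n := by positivity
  have hlower : (j : ℝ) / n < x ↔ j < ⌈n * x⌉₊ := by
    rw [div_lt_iff₀' hn', Nat.lt_ceil]
  have hupper : x ≤ ((j : ℝ) + 1) / n ↔ ⌈n * x⌉₊ ≤ j + 1 := by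
    rw [le_div_iff₀' hn', Nat.ceil_le, Nat.cast_add_one]
  rw [gridCell, mem_Ioc, hlower, hupper, ← gridIndex_add_one hn hx]
  omega

theorem mem_gridCell_gridIndex (hn : n ≠ 0) (hx : 0 < x) : x ∈ gridCell n (gridIndex n x) :=
  (mem_gridCell_iff hn hx).2 rfl

theorem tendsto_gridIndex_div (hx : 0 < x) :
    Tendsto (fun n : ℕ => (gridIndex n x : ℝ) / n) atTop (𝓝 x) := by
  have hlower : Tendsto (fun n : ℕ => x - 1 / (n : ℝ)) atTop (𝓝 x) := by
    simpa using tendsto_const_nhds.sub (tendsto_one_div_atTop_nhds_zero_nat (𝕜 := ℝ))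
  refine tendsto_of_tendsto_of_tendsto_of_le_of_le' hlower tendsto_const_nhds ?_ ?_
  all_goals
    filter_upwards [eventually_ne_atTop 0] with n hn
    obtain ⟨hlt, hle⟩ := mem_gridCell_gridIndex hn hx
  · rwa [sub_le_iff_le_add, ← add_div]
  · exact hlt.le

theorem eventually_gridIndex_mem_Icc (hx : 0 < x) (k : ℕ) :
    ∀ᶠ n : ℕ in atTop, gridIndex n x ∈ Finset.Icc k (n ^ 2 - 1) := by
  have hlarge : Tendsto (fun n : ℕ => (n : ℝ) * x) atTop atTop :=
    tendsto_natCast_atTop_atTop.atTop_mul_const hx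
  filter_upwards [eventually_ne_atTop 0, hlarge.eventually_gt_atTop k,
    tendsto_natCast_atTop_atTop.eventually_ge_atTop x] with n hn hk hxn
  have hlower : k < ⌈n * x⌉₊ := Nat.lt_ceil.2 hk
  have hupper : ⌈n * x⌉₊ ≤ n ^ 2 := Nat.ceil_le.2 <| by
    rw [Nat.cast_pow, sq]
    gcongr
  rw [← gridIndex_add_one hn hx] at hlower hupper
  rw [Finset.mem_Icc]
  omega

end Grid

section GridStep

variable {E : Type*} [NormedAddCommGroup E]

/-- The step function with value `h (j / n)` on the `j`-th grid cell for `j ∈ S`, and `0` off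
these cells. Its integral is the Riemann sum of `h` over the cells in `S`. -/
noncomputable def gridStep (h : ℝ → E) (n : ℕ) (S : Finset ℕ) (x : ℝ) : E :=
  ∑ j ∈ S, (gridCell n j).indicator (fun _ => h (j / n)) x

variable {h : ℝ → E} {g : ℝ → ℝ} {n : ℕ} {S : Finset ℕ} {x : ℝ}

theorem gridStep_apply (hn : n ≠ 0) (hx : 0 < x) :
    gridStep h n S x = if gridIndex n x ∈ S then h (gridIndex n x / n) else 0 := by
  classical
  simp only [gridStep, indicator_apply, mem_gridCell_iff hn hx, Finset.sum_ite_eq']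

theorem aestronglyMeasurable_gridStep (μ : Measure ℝ) :
    AEStronglyMeasurable (gridStep h n S) μ :=
  (Finset.stronglyMeasurable_fun_sum S fun j _ =>
    stronglyMeasurable_const.indicator (measurableSet_gridCell n j)).aestronglyMeasurable

theorem tendsto_gridStep {S : ℕ → Finset ℕ} (hx : 0 < x) (hcont : ContinuousAt h x)
    (hS : ∀ᶠ n in atTop, gridIndex n x ∈ S n) :
    Tendsto (fun n => gridStep h n (S n) x) atTop (𝓝 (h x)) := by
  refine (hcont.tendsto.comp (tendsto_gridIndex_div hx)).congr' ?_
  filter_upwards [eventually_ne_atTop 0, hS] with n hn hmem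
  rw [gridStep_apply hn hx, if_pos hmem, Function.comp_apply]

theorem norm_le_of_mem_gridCell (hmono : MonotoneOn g (Ici 0)) (hbound : ∀ y, 0 ≤ y → ‖h y‖ ≤ g y)
    {j : ℕ} (hx : x ∈ gridCell n j) : ‖h (j / n)‖ ≤ g x := by
  have hj : (0 : ℝ) ≤ j / n := by positivity
  exact (hbound _ hj).trans (hmono hj (hj.trans hx.1.le) hx.1.le)

theorem norm_gridStep_le (hmono : MonotoneOn g (Ici 0)) (hbound : ∀ y, 0 ≤ y → ‖h y‖ ≤ g y)
    (hn : n ≠ 0) (hx : 0 < x) : ‖gridStep h n S x‖ ≤ g x := by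
  rw [gridStep_apply hn hx]
  split_ifs
  · exact norm_le_of_mem_gridCell hmono hbound (mem_gridCell_gridIndex hn hx)
  · exact norm_zero.trans_le ((norm_nonneg _).trans (hbound x hx.le))

variable [NormedSpace ℝ E] [CompleteSpace E] {μ : Measure ℝ}

-- `μ.real` is `0` on a cell of infinite measure, but there the integrability of `g ≥ g (j / n)`
-- forces `h (j / n) = 0`.
theorem setIntegral_gridStep (hmono : MonotoneOn g (Ici 0)) (hg : IntegrableOn g (Ioi 0) μ)
    (hbound : ∀ y, 0 ≤ y → ‖h y‖ ≤ g y) :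
    ∫ x in Ioi 0, gridStep h n S x ∂μ = ∑ j ∈ S, μ.real (gridCell n j) • h (j / n) := by
  have hint (j : ℕ) :
      IntegrableOn ((gridCell n j).indicator fun _ => h (j / n)) (Ioi 0) μ := by
    refine hg.mono' (stronglyMeasurable_const.indicator
      (measurableSet_gridCell n j)).aestronglyMeasurable ?_
    filter_upwards [ae_restrict_mem measurableSet_Ioi] with x (hx : 0 < x)
    by_cases hmem : x ∈ gridCell n j
    · rw [indicator_of_mem hmem]
      exact norm_le_of_mem_gridCell hmono hbound hmem
    · rw [indicator_of_notMem hmem, norm_zero]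
      exact (norm_nonneg _).trans (hbound x hx.le)
  simp only [gridStep, integral_finsetSum S fun j _ => hint j,
    integral_indicator_const _ (measurableSet_gridCell n _), measureReal_restrict_Ioi_gridCell]

theorem tendsto_sum_measureReal_gridCell_smul (hmono : MonotoneOn g (Ici 0))
    (hg : IntegrableOn g (Ioi 0) μ) (hbound : ∀ y, 0 ≤ y → ‖h y‖ ≤ g y)
    (hcont : ∀ᵐ x ∂μ.restrict (Ioi 0), ContinuousAt h x) {S : ℕ → Finset ℕ}
    (hS : ∀ x, 0 < x → ∀ᶠ n in atTop, gridIndex n x ∈ S n) :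
    Tendsto (fun n => ∑ j ∈ S n, μ.real (gridCell n j) • h (j / n)) atTop
      (𝓝 (∫ x in Ioi 0, h x ∂μ)) := by
  simp only [← setIntegral_gridStep hmono hg hbound]
  refine tendsto_integral_filter_of_dominated_convergence g
    (.of_forall fun n => aestronglyMeasurable_gridStep _) ?_ hg ?_
  · filter_upwards [eventually_ne_atTop 0] with n hn
    filter_upwards [ae_restrict_mem measurableSet_Ioi] with x hx
    exact norm_gridStep_le hmono hbound hn hx
  · filter_upwards [ae_restrict_mem measurableSet_Ioi, hcont] with x hx hcontx
    exact tendsto_gridStep hx hcontx (hS x hx)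

end GridStep

section Generator

variable {E : Type*} [NormedAddCommGroup E] [NormedSpace ℝ E]

theorem tendsto_natCast_smul_sub_of_hasDerivWithinAt_Ici {f : ℝ → E} {f' : E} {a : ℝ}
    (hf : HasDerivWithinAt f f' (Ici a) a) :
    Tendsto (fun n : ℕ => (n : ℝ) • (f (a + 1 / n) - f a)) atTop (𝓝 f') := by
  have hmem (n : ℕ) : a + 1 / (n : ℝ) ∈ Ici a :=
    mem_Ici.2 (le_add_of_nonneg_right (by positivity))
  have hscale : Tendsto (fun n : ℕ => (n : ℝ) • (1 / (n : ℝ))) atTop (𝓝 1) := by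
    refine tendsto_const_nhds.congr' ?_
    filter_upwards [eventually_ne_atTop 0] with n hn
    rw [smul_eq_mul, mul_one_div_cancel (Nat.cast_ne_zero.2 hn)]
  simpa using hf.hasFDerivWithinAt.lim tendsto_one_div_atTop_nhds_zero_nat (.of_forall hmem) hscale

theorem stmt12_general [CompleteSpace E] {p₁ p₂ p₃ : ℝ} (hp₃ : p₃ ≠ 0) {μ : Measure ℝ}
    {g : ℝ → ℝ} (hmono : MonotoneOn g (Ici 0)) (hg : IntegrableOn g (Ioi 0) μ)
    {f : ℝ → E} (hbound : ∀ x, 0 ≤ x → ‖f x - f 0‖ ≤ g x)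
    (hcont : ∀ᵐ x ∂μ.restrict (Ioi 0), ContinuousAt f x)
    {f'0 : E} (hder : HasDerivWithinAt f f'0 (Ici 0) 0) :
    Tendsto
      (fun n : ℕ => (n : ℝ) ^ 2 •
        (-(p₁ / ((n : ℝ) ^ 2 * p₃)) • f 0
          + (p₂ / (n * p₃)) • (f (1 / n) - f 0)
          + ∑ j ∈ Finset.Icc (2 : ℕ) (n ^ 2 - 1),
              (μ.real (Ioc ((j : ℝ) / n) (((j : ℝ) + 1) / n)) / ((n : ℝ) ^ 2 * p₃)) •
                (f (j / n) - f 0)))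
      atTop
      (𝓝 (p₃⁻¹ • (-p₁ • f 0 + p₂ • f'0 + ∫ x in Ioi 0, (f x - f 0) ∂μ))) := by
  have hslope : Tendsto (fun n : ℕ => (n : ℝ) • (f (1 / n) - f 0)) atTop (𝓝 f'0) := by
    simpa only [zero_add] using tendsto_natCast_smul_sub_of_hasDerivWithinAt_Ici hder
  have hjumps := tendsto_sum_measureReal_gridCell_smul hmono hg hbound
    (hcont.mono fun x hx => hx.sub continuousAt_const)
    fun x hx => eventually_gridIndex_mem_Icc hx 2
  refine ((((hslope.const_smul p₂).const_add (-p₁ • f 0)).add hjumps).const_smul p₃⁻¹).congr' ?_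
  filter_upwards [eventually_ne_atTop 0] with n hn
  have hn' : (n : ℝ) ≠ 0 := Nat.cast_ne_zero.2 hn
  have hrescale (a : ℝ) : (n : ℝ) ^ 2 * (a / ((n : ℝ) ^ 2 * p₃)) = p₃⁻¹ * a := by field_simp
  have hrescale_slope : (n : ℝ) ^ 2 * (p₂ / (n * p₃)) = p₃⁻¹ * (p₂ * n) := by field_simp
  simp only [smul_add, Finset.smul_sum, smul_smul, ← neg_div, hrescale, hrescale_slope,
    gridCell]

end Generator

/-- Convergence of the rescaled generator at the boundary (case `p₃ ≠ 0`):
`n² D_n → (-p₁ f(0) + p₂ f'(0) + ∫_{(0,∞)} (f(x) - f(0)) dμ)/p₃`, where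
`D_n := -(p₁/(n²p₃)) f(0) + (p₂/(np₃))(f(1/n) - f(0))
+ ∑_{j=2}^{n²-1} (μ((j/n,(j+1)/n])/(n²p₃))(f(j/n) - f(0))`. -/
theorem stmt12 (p₁ p₂ p₃ : ℝ) (hp₁ : 0 ≤ p₁) (hp₂ : 0 ≤ p₂) (hp₃ : 0 < p₃)
    (μ : Measure ℝ) (hcar : μ (Set.Iic 0) = 0)
    (hI : IntegrableOn (fun x => min x 1) (Set.Ioi 0) μ)
    (f : ℝ → ℝ) (hf : ContinuousOn f (Set.Ici 0))
    (C : ℝ) (hdom : ∀ x : ℝ, 0 ≤ x → |f x - f 0| ≤ C * min x 1)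
    (f'0 : ℝ) (hder : HasDerivWithinAt f f'0 (Set.Ici 0) 0) :
    Filter.Tendsto
      (fun n : ℕ => (n : ℝ) ^ 2 *
        (-(p₁ / ((n : ℝ) ^ 2 * p₃)) * f 0
          + p₂ / ((n : ℝ) * p₃) * (f (1 / (n : ℝ)) - f 0)
          + ∑ j ∈ Finset.Icc (2 : ℕ) (n ^ 2 - 1),
              (μ (Set.Ioc ((j : ℝ) / (n : ℝ)) (((j : ℝ) + 1) / (n : ℝ)))).toReal /
                  ((n : ℝ) ^ 2 * p₃) * (f ((j : ℝ) / (n : ℝ)) - f 0)))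
      Filter.atTop
      (nhds ((-p₁ * f 0 + p₂ * f'0 + ∫ x in Set.Ioi (0 : ℝ), (f x - f 0) ∂μ) / p₃)) := by
  have hC : 0 ≤ C := by simpa using (abs_nonneg _).trans (hdom 1 zero_le_one)
  have hmono : Monotone fun x : ℝ => C * min x 1 := (monotone_id.min monotone_const).const_mul hC
  rw [div_eq_inv_mul]
  exact stmt12_general hp₃.ne' (hmono.monotoneOn _) (hI.const_mul C) hdom
    (ae_restrict_of_forall_mem measurableSet_Ioi fun x hx => hf.continuousAt (Ici_mem_nhds hx)) hder
end

section
/- Let (𝔭_j)_{j∈ℕ} be nonnegative reals with Σ_{j=0}^∞ 𝔭_j ≤ 1, and let a_k := μ_k(0) be the occupation probabilities of 0 for the boundary random walk started at i₀ = 0. Then for every integer k ≥ 2, a_k = 𝔭₀ a_{k−1} + Σ_{i=1}^{k−1} 𝔭_i Σ_{j=0}^{⌊(k−i−1)/2⌋} a_{k−i−2j−1} · M_{i,j} / 2^{i+2j}, where M_{i,j} := (i/(i+2j)) · binom(i+2j, j) are the shifted Catalan numbers. -/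
/-- The shifted Catalan number `M_{i,j} = (i/(i+2j)) C(i+2j, j)`, as a real number. -/
noncomputable def Mcat (i j : ℕ) : ℝ :=
  (i : ℝ) / ((i : ℝ) + 2 * (j : ℝ)) * (Nat.choose (i + 2 * j) j : ℝ)

/-!
Let `F i n` be the probability that the simple random walk started at `i` first hits `0` at
step `n`. The transition matrix acts on the function `F · n` by
`P (F · n) = F · (n + 1) + r n • δ₀`, where `r n = ∑ j, 𝔭 j * F j n` is the probability that an
excursion from `0` lasts `n + 1` steps. Pairing with the distribution `μ k` gives
`⟨μ (k + 1), F · n⟩ = ⟨μ k, F · (n + 1)⟩ + a k * r n`, and since `a k = ⟨μ k, F · 0⟩`, iterating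
yields the renewal equation for `a`. It remains to see that `F i (i + 2 * j)` is
`M i j / 2 ^ (i + 2 * j)`, because both sides satisfy the same recursion, and that `F i n` vanishes
for all other `n`.
-/

open Finset

/-- The probability that the simple random walk started at `i` hits `0` for the first time at
step `n`, defined by conditioning on the first step. -/
noncomputable def hitProb : ℕ → ℕ → ℝ
  | 0, 0 => 1
  | 0, _ + 1 => 0
  | _ + 1, 0 => 0
  | i + 1, n + 1 => (hitProb i n + hitProb (i + 2) n) / 2

lemma hitProb_zero_left (n : ℕ) : hitProb 0 n = if n = 0 then 1 else 0 := by
  cases n <;> simp [hitProb]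

lemma hitProb_zero_right (i : ℕ) : hitProb i 0 = if i = 0 then 1 else 0 := by
  cases i <;> simp [hitProb]

lemma hitProb_succ_succ (i n : ℕ) :
    hitProb (i + 1) (n + 1) = (hitProb i n + hitProb (i + 2) n) / 2 := by
  rw [hitProb]

lemma hitProb_eq_zero_of_forall_ne {i n : ℕ} (h : ∀ j, n ≠ i + 2 * j) : hitProb i n = 0 := by
  induction n generalizing i with
  | zero => rw [hitProb_zero_right, if_neg fun hi => h 0 (by omega)]
  | succ n ih =>
    cases i with
    | zero => simp [hitProb_zero_left]
    | succ i =>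
      have below : hitProb i n = 0 := ih fun j hj => h j (by omega)
      have above : hitProb (i + 2) n = 0 := ih fun j hj => h (j + 1) (by omega)
      rw [hitProb_succ_succ, below, above, add_zero, zero_div]

lemma hitProb_eq_zero_of_lt {i n : ℕ} (h : n < i) : hitProb i n = 0 :=
  hitProb_eq_zero_of_forall_ne fun j => by omega

lemma hitProb_self (i : ℕ) : hitProb i i = 1 / 2 ^ i := by
  induction i with
  | zero => simp [hitProb_zero_left]
  | succ i ih =>
    rw [hitProb_succ_succ, ih, hitProb_eq_zero_of_lt (by omega : i < i + 2), pow_succ]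
    ring

lemma Mcat_zero_left (j : ℕ) : Mcat 0 j = 0 := by
  simp [Mcat]

lemma Mcat_zero_right {i : ℕ} (hi : i ≠ 0) : Mcat i 0 = 1 := by
  simp [Mcat, hi]

lemma Mcat_succ_succ (i j : ℕ) : Mcat (i + 1) (j + 1) = Mcat i (j + 1) + Mcat (i + 2) j := by
  have choose_ratio : ((i + 2 * j + 2).choose (j + 1) : ℝ) =
      (i + 2 * j + 2).choose j * (i + j + 2) / (j + 1) := by
    rw [eq_div_iff (by positivity)]
    have h := Nat.choose_succ_right_eq (i + 2 * j + 2) j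
    rw [show i + 2 * j + 2 - j = i + j + 2 by omega] at h
    exact_mod_cast h
  rw [Mcat, Mcat, Mcat, show i + 1 + 2 * (j + 1) = i + 2 * j + 2 + 1 by ring,
    show i + 2 * (j + 1) = i + 2 * j + 2 by ring, show i + 2 + 2 * j = i + 2 * j + 2 by ring,
    Nat.choose_succ_succ']
  push_cast
  rw [choose_ratio, show (i : ℝ) + 2 + 2 * j = i + 2 * (j + 1) by ring]
  field_simp
  ring

theorem hitProb_add_two_mul {i : ℕ} (hi : i ≠ 0) (j : ℕ) :
    hitProb i (i + 2 * j) = Mcat i j / 2 ^ (i + 2 * j) := by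
  induction j generalizing i with
  | zero => simp [hitProb_self, Mcat_zero_right hi]
  | succ j ih_j =>
    clear hi
    induction i with
    | zero => simp [hitProb_zero_left, Mcat_zero_left]
    | succ i ih_i =>
      have above : hitProb (i + 2) (i + 2 * (j + 1)) = Mcat (i + 2) j / 2 ^ (i + 2 * (j + 1)) := by
        rw [show i + 2 * (j + 1) = i + 2 + 2 * j by ring]
        exact ih_j (by omega)
      rw [show i + 1 + 2 * (j + 1) = i + 2 * (j + 1) + 1 by ring, hitProb_succ_succ, ih_i, above,
        Mcat_succ_succ, pow_succ]
      ring

lemma sum_range_mul_hitProb (g : ℕ → ℝ) {i k : ℕ} (hi : i ≠ 0) (hik : i < k) :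
    ∑ n ∈ range k, g n * hitProb i n =
      ∑ j ∈ range ((k - i - 1) / 2 + 1), g (i + 2 * j) * (Mcat i j / 2 ^ (i + 2 * j)) := by
  symm
  refine sum_of_injOn (fun j => i + 2 * j) (fun x _ y _ h => by grind) ?_ ?_ ?_
  · intro j hj
    simp only [coe_range, Set.mem_Iio] at hj ⊢
    omega
  · intro n hn hn_image
    rw [hitProb_eq_zero_of_forall_ne, mul_zero]
    rintro j rfl
    refine hn_image ⟨j, ?_, rfl⟩
    simp only [coe_range, Set.mem_Iio, mem_range] at hn ⊢
    omega
  · intro j _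
    rw [hitProb_add_two_mul hi]

section BoundaryWalk

variable (p : ℕ → ℝ) (i₀ : ℕ)

/-- The probability that the boundary random walk with jumping measure `p`, started at `0`,
first returns to `0` at step `n + 1`. Sites `j > n` cannot reach `0` within the `n` steps that
remain after the jump. -/
noncomputable def returnProb (n : ℕ) : ℝ :=
  ∑ j ∈ range (n + 1), p j * hitProb j n

lemma returnProb_eq_sum_range {n k : ℕ} (hn : n < k) :
    returnProb p n = ∑ j ∈ range k, p j * hitProb j n := by
  refine sum_subset (range_subset_range.2 hn) fun j _ hj => ?_
  rw [hitProb_eq_zero_of_lt (by simpa using hj), mul_zero]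

lemma Ptrans_eq_zero_of_lt {i j : ℕ} (h : j + 1 < i) : Ptrans p i j = 0 := by
  obtain ⟨i, rfl⟩ := Nat.exists_eq_add_one_of_ne_zero (by omega : i ≠ 0)
  rw [Ptrans, if_neg (by omega)]

lemma summable_mul_Ptrans (μ : ℕ → ℝ) (j : ℕ) : Summable fun i => μ i * Ptrans p i j :=
  summable_of_ne_finset_zero (s := range (j + 2)) fun i hi => by
    rw [Ptrans_eq_zero_of_lt p (by grind), mul_zero]

lemma sum_occ_succ_mul (k : ℕ) (s : Finset ℕ) (f : ℕ → ℝ) :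
    ∑ j ∈ s, occ p i₀ (k + 1) j * f j =
      ∑' i, occ p i₀ k i * ∑ j ∈ s, Ptrans p i j * f j := by
  simp only [occ, ← tsum_mul_right, mul_sum, ← mul_assoc]
  exact (Summable.tsum_finsetSum fun j _ => (summable_mul_Ptrans p _ j).mul_right (f j)).symm

lemma sum_Ptrans_mul_hitProb (i n : ℕ) :
    ∑ j ∈ range (n + 1), Ptrans p i j * hitProb j n =
      hitProb i (n + 1) + if i = 0 then returnProb p n else 0 := by
  cases i with
  | zero => simp [Ptrans, returnProb, hitProb_zero_left]
  | succ i =>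
    have split_steps (j : ℕ) : Ptrans p (i + 1) j * hitProb j n =
        (if j = i then hitProb i n / 2 else 0) +
          if j = i + 2 then hitProb (i + 2) n / 2 else 0 := by
      grind [Ptrans]
    have of_notMem (l : ℕ) (hl : l ∉ range (n + 1)) : hitProb l n / 2 = 0 := by
      rw [hitProb_eq_zero_of_lt (by simpa using hl), zero_div]
    simp only [split_steps, sum_add_distrib, sum_ite_eq']
    rw [ite_eq_left_iff.2 fun h => (of_notMem i h).symm,
      ite_eq_left_iff.2 fun h => (of_notMem (i + 2) h).symm, hitProb_succ_succ,
      if_neg i.succ_ne_zero]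
    ring

lemma sum_occ_succ_mul_hitProb (k n : ℕ) :
    ∑ j ∈ range (n + 1), occ p i₀ (k + 1) j * hitProb j n =
      ∑ j ∈ range (n + 2), occ p i₀ k j * hitProb j (n + 1) + occ p i₀ k 0 * returnProb p n := by
  rw [sum_occ_succ_mul, tsum_eq_sum (s := range (n + 2))]
  · simp [sum_Ptrans_mul_hitProb, mul_add, sum_add_distrib]
  · intro i hi
    have n_lt : n + 1 < i := by grind
    rw [sum_Ptrans_mul_hitProb, hitProb_eq_zero_of_lt n_lt, if_neg (by omega), add_zero, mul_zero]

lemma sum_occ_mul_hitProb (k n : ℕ) :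
    ∑ j ∈ range (n + 1), occ p i₀ k j * hitProb j n =
      hitProb i₀ (n + k) +
        ∑ m ∈ range k, occ p i₀ m 0 * returnProb p (n + k - 1 - m) := by
  induction k generalizing n with
  | zero =>
    have start_far : n < i₀ → hitProb i₀ n = 0 := hitProb_eq_zero_of_lt
    simpa [occ, ite_mul] using fun h => (start_far h).symm
  | succ k ih =>
    rw [sum_occ_succ_mul_hitProb, ih, sum_range_succ, show n + 1 + k = n + (k + 1) by ring,
      show n + (k + 1) - 1 - k = n by omega, add_assoc]

theorem occ_zero_eq_hitProb_add_sum (k : ℕ) :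
    occ p i₀ k 0 =
      hitProb i₀ k + ∑ n ∈ range k, occ p i₀ (k - 1 - n) 0 * returnProb p n := by
  have renewal := sum_occ_mul_hitProb p i₀ k 0
  simp only [zero_add, sum_range_one, hitProb_zero_right, if_true, mul_one] at renewal
  rw [renewal, ← sum_range_reflect]
  congr! 2 with n hn
  rw [Nat.sub_sub_self (by grind)]

lemma occ_zero_eq_hitProb_add_sum_jump (k : ℕ) :
    occ p i₀ k 0 = hitProb i₀ k +
      ∑ i ∈ range k, p i * ∑ n ∈ range k, occ p i₀ (k - 1 - n) 0 * hitProb i n := by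
  rw [occ_zero_eq_hitProb_add_sum]
  simp only [mul_sum]
  rw [sum_comm]
  congr! 2 with n hn
  rw [returnProb_eq_sum_range p (mem_range.1 hn), mul_sum]
  exact sum_congr rfl fun i _ => mul_left_comm _ _ _

end BoundaryWalk

theorem stmt13_general (p : ℕ → ℝ) (i₀ : ℕ) {k : ℕ} (hk : k ≠ 0) :
    occ p i₀ k 0 =
      hitProb i₀ k + (p 0 * occ p i₀ (k - 1) 0 +
        ∑ i ∈ Icc 1 (k - 1), p i *
          ∑ j ∈ range ((k - i - 1) / 2 + 1),
            occ p i₀ (k - i - 2 * j - 1) 0 * Mcat i j / 2 ^ (i + 2 * j)) := by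
  have range_eq_insert : range k = insert 0 (Icc 1 (k - 1)) := by grind
  have jump_to_zero :
      ∑ n ∈ range k, occ p i₀ (k - 1 - n) 0 * hitProb 0 n = occ p i₀ (k - 1) 0 := by
    simp [hitProb_zero_left, hk]
  have jump_to_pos (i : ℕ) (hi : i ∈ Icc 1 (k - 1)) :
      ∑ n ∈ range k, occ p i₀ (k - 1 - n) 0 * hitProb i n =
        ∑ j ∈ range ((k - i - 1) / 2 + 1),
          occ p i₀ (k - i - 2 * j - 1) 0 * Mcat i j / 2 ^ (i + 2 * j) := by
    rw [sum_range_mul_hitProb _ (by grind) (by grind)]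
    congr! 1 with j
    rw [mul_div_assoc, show k - 1 - (i + 2 * j) = k - i - 2 * j - 1 by omega]
  rw [occ_zero_eq_hitProb_add_sum_jump]
  nth_rw 1 [range_eq_insert]
  rw [sum_insert (by simp), jump_to_zero,
    sum_congr rfl fun i hi => congrArg (p i * ·) (jump_to_pos i hi)]

/-- First-return decomposition of the occupation probabilities `aₖ = μₖ(0)` of the
boundary random walk started at `0`: for `k ≥ 2`,
`aₖ = 𝔭₀ a_{k-1} + ∑_{i=1}^{k-1} 𝔭ᵢ ∑_{j=0}^{⌊(k-i-1)/2⌋} a_{k-i-2j-1} M_{i,j}/2^{i+2j}`. -/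
theorem stmt13 (p : ℕ → ℝ) (hp0 : ∀ j, 0 ≤ p j) (hpsum : Summable p)
    (hp1 : ∑' j : ℕ, p j ≤ 1) (k : ℕ) (hk : 2 ≤ k) :
    occ p 0 k 0 =
      p 0 * occ p 0 (k - 1) 0 +
        ∑ i ∈ Finset.Icc 1 (k - 1), p i *
          ∑ j ∈ Finset.range ((k - i - 1) / 2 + 1),
            occ p 0 (k - i - 2 * j - 1) 0 * Mcat i j / 2 ^ (i + 2 * j) := by
  have k_ne_zero : k ≠ 0 := by omega
  rw [stmt13_general p 0 k_ne_zero, hitProb_zero_left, if_neg k_ne_zero, zero_add]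
end

section
/- Let p₁ ≥ 0 and p₂ > 0 be constants, and let μ be a nonnegative Borel measure on ℝ carried by (0,∞) with I := ∫_{(0,∞)} min(x,1) dμ(x) < ∞. Let f : ℝ → ℝ satisfy |f(x)| ≤ F₀ for all x ≥ 0 and |f(x) − f(y)| ≤ F₁ |x − y| for all x, y ≥ 0. For an integer n ≥ 2, set 𝔭₁^{(n)} := 1 − p₁/(n p₂) − Σ_{j=2}^{n²−1} μ((j/n,(j+1)/n])/(n p₂), and assume 𝔭₁^{(n)} ≥ 0. Define D'_n := −(p₁/(n p₂)) f(0) + 𝔭₁^{(n)} (f(1/n) − f(0)) + Σ_{j=2}^{n²−1} (μ((j/n,(j+1)/n])/(n p₂)) (f(j/n) − f(0)). Then |D'_n| ≤ (p₁ F₀ + p₂ F₁ + (2F₀ + F₁) I)/(n p₂). -/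
open MeasureTheory

/-!
The three contributions to `D'_n` are estimated separately. Killing costs at most `p₁F₀/(np₂)`, and
the step to `1/n` at most `F₁/n`, since its probability is at most `1`. For the jumps,
`|f(x) - f(0)| ≤ (2F₀ + F₁) min(x, 1)`, and since `min(x, 1)` is increasing, its values at the left
endpoints of the cells `(j/n, (j+1)/n]`, weighted by `μ`, form a lower Riemann sum of
`∫ min(x, 1) dμ`.
-/

theorem measureReal_mul_le_setIntegral {α : Type*} [MeasurableSpace α] {μ : Measure α} {S : Set α}
    {g : α → ℝ} {c : ℝ} (hS : MeasurableSet S) (hg : IntegrableOn g S μ) (hg₀ : ∀ x ∈ S, 0 ≤ g x)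
    (hc : ∀ x ∈ S, c ≤ g x) : μ.real S * c ≤ ∫ x in S, g x ∂μ := by
  by_cases hμS : μ S = ⊤
  · -- By convention `μ.real S = 0` here.
    simpa [measureReal_def, hμS] using setIntegral_nonneg hS hg₀
  · simpa using setIntegral_mono_on (integrableOn_const hμS) hg hS hc

theorem sum_measureReal_Ioc_mul_le_setIntegral_Ioi {μ : Measure ℝ} {a : ℕ → ℝ} {b : ℝ} {g : ℝ → ℝ}
    (ha : Monotone a) (hb : ∀ j, b ≤ a j) (hg : MonotoneOn g (Set.Ici b))
    (hg₀ : ∀ x ∈ Set.Ioi b, 0 ≤ g x) (hint : IntegrableOn g (Set.Ioi b) μ) (s : Finset ℕ) :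
    ∑ j ∈ s, μ.real (Set.Ioc (a j) (a (j + 1))) * g (a j) ≤ ∫ x in Set.Ioi b, g x ∂μ := by
  have hsub (j : ℕ) : Set.Ioc (a j) (a (j + 1)) ⊆ Set.Ioi b := fun x hx => (hb j).trans_lt hx.1
  calc ∑ j ∈ s, μ.real (Set.Ioc (a j) (a (j + 1))) * g (a j)
      ≤ ∑ j ∈ s, ∫ x in Set.Ioc (a j) (a (j + 1)), g x ∂μ :=
        Finset.sum_le_sum fun j _ => measureReal_mul_le_setIntegral measurableSet_Ioc
          (hint.mono_set (hsub j)) (fun x hx => hg₀ x (hsub j hx))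
          fun x hx => hg (hb j) (Set.Ioi_subset_Ici_self (hsub j hx)) hx.1.le
    _ = ∫ x in ⋃ j ∈ s, Set.Ioc (a j) (a (j + 1)), g x ∂μ :=
        (integral_biUnion_finset s (fun _ _ => measurableSet_Ioc)
          (ha.pairwise_disjoint_on_Ioc_succ.set_pairwise _)
          fun j _ => hint.mono_set (hsub j)).symm
    _ ≤ ∫ x in Set.Ioi b, g x ∂μ :=
        setIntegral_mono_set hint (ae_restrict_of_forall_mem measurableSet_Ioi hg₀)
          (Set.iUnion₂_subset fun j _ => hsub j).eventuallyLE

theorem le_add_mul_min_one {d A B x : ℝ} (hd : 0 ≤ d) (hx : 0 ≤ x) (hA : d ≤ A) (hB : d ≤ B * x) :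
    d ≤ (A + B) * min x 1 := by
  rcases le_total x 1 with hx₁ | hx₁
  · rw [min_eq_left hx₁]
    linarith [mul_nonneg (hd.trans hA) hx]
  · have hB₀ : 0 ≤ B := nonneg_of_mul_nonneg_left (hd.trans hB) (zero_lt_one.trans_le hx₁)
    rw [min_eq_right hx₁]
    linarith

/-- The left-hand side is `|P u (0) - u(0)|` for a step `P` that kills with probability `q`, jumps
to `i` with probability `w i` and otherwise moves to a default site; `a` is `u(0)`, while `b` and
`d i` are the increments of `u` to the default site and to `i`. -/
theorem abs_killed_step_le {ι : Type*} (s : Finset ι) {q : ℝ} {w : ι → ℝ} (a b : ℝ) (d : ι → ℝ)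
    (hq : 0 ≤ q) (hw : ∀ i ∈ s, 0 ≤ w i) (hrest : 0 ≤ 1 - q - ∑ i ∈ s, w i) :
    |-q * a + (1 - q - ∑ i ∈ s, w i) * b + ∑ i ∈ s, w i * d i|
      ≤ q * |a| + |b| + ∑ i ∈ s, w i * |d i| := by
  have hrest_le : 1 - q - ∑ i ∈ s, w i ≤ 1 := by linarith [Finset.sum_nonneg hw]
  refine (abs_add_three _ _ _).trans (add_le_add_three ?_ ?_ ?_)
  · rw [abs_mul, abs_neg, abs_of_nonneg hq]
  · rw [abs_mul, abs_of_nonneg hrest]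
    exact mul_le_of_le_one_left (abs_nonneg b) hrest_le
  · refine (Finset.abs_sum_le_sum_abs _ _).trans_eq (Finset.sum_congr rfl fun i hi => ?_)
    rw [abs_mul, abs_of_nonneg (hw i hi)]

section Boundary

variable {μ : Measure ℝ} {f : ℝ → ℝ} {F₀ F₁ : ℝ}

theorem sum_measureReal_Ioc_mul_abs_sub_le
    (hI : IntegrableOn (fun x => min x 1) (Set.Ioi 0) μ) (hF₀ : ∀ x, 0 ≤ x → |f x| ≤ F₀)
    (hF₁ : ∀ x, 0 ≤ x → |f x - f 0| ≤ F₁ * x) (n : ℕ) (s : Finset ℕ) :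
    ∑ j ∈ s, μ.real (Set.Ioc ((j : ℝ) / n) (((j : ℝ) + 1) / n)) * |f (j / n) - f 0|
      ≤ (2 * F₀ + F₁) * ∫ x in Set.Ioi (0 : ℝ), min x 1 ∂μ := by
  have hF₀_nonneg : 0 ≤ F₀ := (abs_nonneg _).trans (hF₀ 0 le_rfl)
  have hF₁_nonneg : 0 ≤ F₁ := by simpa using (abs_nonneg _).trans (hF₁ 1 zero_le_one)
  have hosc (x : ℝ) (hx : 0 ≤ x) : |f x - f 0| ≤ (2 * F₀ + F₁) * min x 1 :=
    le_add_mul_min_one (abs_nonneg _) hx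
      (by linarith [abs_sub (f x) (f 0), hF₀ x hx, hF₀ 0 le_rfl]) (hF₁ x hx)
  have hgrid : Monotone fun j : ℕ => (j : ℝ) / n := fun i j hij => by dsimp only; gcongr
  have hriemann := sum_measureReal_Ioc_mul_le_setIntegral_Ioi hgrid (fun j => by positivity)
    (fun x _ y _ hxy => min_le_min_right 1 hxy) (fun x hx => le_min (le_of_lt hx) zero_le_one) hI s
  calc ∑ j ∈ s, μ.real (Set.Ioc ((j : ℝ) / n) (((j : ℝ) + 1) / n)) * |f (j / n) - f 0|
      ≤ ∑ j ∈ s, μ.real (Set.Ioc ((j : ℝ) / n) (((j : ℝ) + 1) / n)) *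
          ((2 * F₀ + F₁) * min ((j : ℝ) / n) 1) := by
        gcongr with j
        exact hosc _ (by positivity)
    _ = (2 * F₀ + F₁) * ∑ j ∈ s, μ.real (Set.Ioc ((j : ℝ) / n) (((j : ℝ) + 1) / n)) *
          min ((j : ℝ) / n) 1 := by
        rw [Finset.mul_sum]
        exact Finset.sum_congr rfl fun j _ => mul_left_comm _ _ _
    _ ≤ (2 * F₀ + F₁) * ∫ x in Set.Ioi (0 : ℝ), min x 1 ∂μ := by
        push_cast at hriemann
        gcongr

theorem stmt16_general {p₁ p₂ : ℝ} (hp₁ : 0 ≤ p₁) (hp₂ : 0 < p₂)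
    (hI : IntegrableOn (fun x => min x 1) (Set.Ioi 0) μ) (hF₀ : ∀ x, 0 ≤ x → |f x| ≤ F₀)
    (hF₁ : ∀ x, 0 ≤ x → |f x - f 0| ≤ F₁ * x) {n : ℕ} (hn : n ≠ 0) (s : Finset ℕ)
    (hpos : 0 ≤ 1 - p₁ / (n * p₂) -
      (∑ j ∈ s, μ.real (Set.Ioc ((j : ℝ) / n) (((j : ℝ) + 1) / n))) / (n * p₂)) :
    |-(p₁ / (n * p₂)) * f 0
        + (1 - p₁ / (n * p₂) -
            (∑ j ∈ s, μ.real (Set.Ioc ((j : ℝ) / n) (((j : ℝ) + 1) / n))) / (n * p₂)) *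
          (f (1 / n) - f 0)
        + ∑ j ∈ s, μ.real (Set.Ioc ((j : ℝ) / n) (((j : ℝ) + 1) / n)) / (n * p₂) *
            (f (j / n) - f 0)|
      ≤ (p₁ * F₀ + p₂ * F₁ + (2 * F₀ + F₁) * ∫ x in Set.Ioi (0 : ℝ), min x 1 ∂μ) /
          (n * p₂) := by
  rw [Finset.sum_div] at hpos ⊢
  calc _ ≤ p₁ / (n * p₂) * |f 0| + |f (1 / n) - f 0| +
          ∑ j ∈ s, μ.real (Set.Ioc ((j : ℝ) / n) (((j : ℝ) + 1) / n)) / (n * p₂) *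
            |f (j / n) - f 0| :=
        abs_killed_step_le s _ _ _ (by positivity) (fun j _ => by positivity) hpos
    _ = p₁ / (n * p₂) * |f 0| + |f (1 / n) - f 0| +
          (∑ j ∈ s, μ.real (Set.Ioc ((j : ℝ) / n) (((j : ℝ) + 1) / n)) * |f (j / n) - f 0|) /
            (n * p₂) := by
        simp only [Finset.sum_div, div_mul_eq_mul_div]
    _ ≤ p₁ / (n * p₂) * F₀ + F₁ * (1 / n) +
          ((2 * F₀ + F₁) * ∫ x in Set.Ioi (0 : ℝ), min x 1 ∂μ) / (n * p₂) := by
        gcongr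
        · exact hF₀ 0 le_rfl
        · exact hF₁ _ (by positivity)
        · exact sum_measureReal_Ioc_mul_abs_sub_le hI hF₀ hF₁ n s
    _ = _ := by field_simp

end Boundary

/-- Boundary estimate for the generator of the rescaled boundary random walk
(case `p₂ ≠ 0`, `p₃ = 0`): with `𝔭₁⁽ⁿ⁾ = 1 - p₁/(np₂) - ∑_{j=2}^{n²-1} μ((j/n,(j+1)/n])/(np₂)`
assumed nonnegative, and `D'_n := -(p₁/(np₂)) f(0) + 𝔭₁⁽ⁿ⁾ (f(1/n) - f(0))
+ ∑_{j=2}^{n²-1}(μ((j/n,(j+1)/n])/(np₂))(f(j/n) - f(0))`, one has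
`|D'_n| ≤ (p₁F₀ + p₂F₁ + (2F₀+F₁)∫min(x,1)dμ)/(np₂)`. -/
theorem stmt16 (p₁ p₂ : ℝ) (hp₁ : 0 ≤ p₁) (hp₂ : 0 < p₂)
    (μ : Measure ℝ) (hcar : μ (Set.Iic 0) = 0)
    (hI : IntegrableOn (fun x => min x 1) (Set.Ioi 0) μ)
    (f : ℝ → ℝ) (F₀ F₁ : ℝ)
    (hF₀ : ∀ x : ℝ, 0 ≤ x → |f x| ≤ F₀)
    (hF₁ : ∀ x y : ℝ, 0 ≤ x → 0 ≤ y → |f x - f y| ≤ F₁ * |x - y|)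
    (n : ℕ) (hn : 2 ≤ n)
    (hpos : 0 ≤ 1 - p₁ / ((n : ℝ) * p₂) -
      (∑ j ∈ Finset.Icc (2 : ℕ) (n ^ 2 - 1),
        (μ (Set.Ioc ((j : ℝ) / (n : ℝ)) (((j : ℝ) + 1) / (n : ℝ)))).toReal) /
          ((n : ℝ) * p₂)) :
    |(-(p₁ / ((n : ℝ) * p₂)) * f 0
        + (1 - p₁ / ((n : ℝ) * p₂) -
            (∑ j ∈ Finset.Icc (2 : ℕ) (n ^ 2 - 1),
              (μ (Set.Ioc ((j : ℝ) / (n : ℝ)) (((j : ℝ) + 1) / (n : ℝ)))).toReal) /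
                ((n : ℝ) * p₂)) * (f (1 / (n : ℝ)) - f 0)
        + ∑ j ∈ Finset.Icc (2 : ℕ) (n ^ 2 - 1),
            (μ (Set.Ioc ((j : ℝ) / (n : ℝ)) (((j : ℝ) + 1) / (n : ℝ)))).toReal /
                ((n : ℝ) * p₂) * (f ((j : ℝ) / (n : ℝ)) - f 0))|
      ≤ (p₁ * F₀ + p₂ * F₁ + (2 * F₀ + F₁) * ∫ x in Set.Ioi (0 : ℝ), min x 1 ∂μ) /
          ((n : ℝ) * p₂) := by
  refine stmt16_general hp₁ hp₂ hI hF₀ (fun x hx => ?_) (by omega) _ hpos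
  simpa only [sub_zero, abs_of_nonneg hx] using hF₁ x 0 hx le_rfl
end
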